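/- arXiv:2412.09724 — 2 statements merged into one kernel-verified Lean document; each statement's English description precedes it below -/
import Mathlib

section
/- The algebras R_{r,a} and R_{r,b} are opposite to each other. More precisely, the k-linear bijection φ : R_{r,a} → R_{r,b} determined on basis elements by φ(w_i) = w_{−a·i} (indices taken in Z/rZ) is an algebra anti-isomorphism: φ(w_0) = w_0 and φ(u·v) = φ(v)·φ(u) for all u, v ∈ R_{r,a}; equivalently, φ is a k-algebra isomorphism from the opposite algebra (R_{r,a})^{op} onto R_{r,b}. -/
/-!
On basis elements the claim is that `w_j · w_i` and `φ(w_i) · φ(w_j)` vanish simultaneously; when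
both are nonzero, additivity of `x ↦ -a·x` matches the indices. Put `X = [-a·j]` and `Y = [i]`.
The product `w_j · w_i` is zero iff some `1 ≤ p ≤ X` has `[p·b] ≤ Y` (`lt_KKm_iff`). Since
`X = [-a·j]` and `Y = [-b·(-a·i)]`, the product `φ(w_i) · φ(w_j)` is zero iff some `1 ≤ q ≤ Y` has
`[q·a] ≤ X`. The mutually inverse maps `p ↦ q = [p·b]` and `q ↦ p = [q·a]` exchange
such `p` and `q` (`lt_mod_of_lt_mod`). The bilinear statement follows by reindexing the double sum.
-/


/-- The function `m : ZMod r → ℕ` of the Kalck–Karmazyn algebra: `m 0 = r` and, for `j ≠ 0`,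
`m j = min_{1 ≤ k ≤ [-a·j]} [k·b]`, where `[x]` denotes the representative in `{0,…,r-1}`. -/
noncomputable def KKm (r a b : ℕ) (j : ZMod r) : ℕ :=
  if j = 0 then r
  else sInf {v : ℕ | ∃ k : ℕ, 1 ≤ k ∧ k ≤ ((-(a : ZMod r)) * j).val ∧ v = (k * b) % r}

/-- The multiplication of the Kalck–Karmazyn algebra `R_{r,a}` on coordinates with respect to
the basis `{w_i}`: `w_j · w_i = w_{i+j}` if `m j > [i]`, else `0` (`f` = left factor).
The algebra `R_{r,b}` is obtained by interchanging the roles of `a` and `b`, i.e. it is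
`KKmul k r b a`. -/
noncomputable def KKmul (k : Type*) [Field k] (r a b : ℕ) [NeZero r]
    (f g : ZMod r → k) : ZMod r → k :=
  fun s => ∑ j : ZMod r, ∑ i : ZMod r,
    if j + i = s ∧ i.val < KKm r a b j then f j * g i else 0

/-- The condition `[i] < m(j)` with the minimum spelled out. The case `j = 0` is included: there
the bound `[-a·j]` is `0`, so the right-hand side is vacuous. -/
lemma lt_KKm_iff (r a b : ℕ) [NeZero r] (h : (b * a : ZMod r) = 1) (i j : ZMod r) :
    i.val < KKm r a b j ↔
      ∀ p : ℕ, 1 ≤ p → p ≤ (-(a : ZMod r) * j).val → i.val < (p * b) % r := by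
  unfold KKm
  split_ifs with hj
  · subst hj
    simp only [mul_zero, ZMod.val_zero]
    exact ⟨fun _ p h1 h2 => by omega, fun _ => ZMod.val_lt i⟩
  · constructor
    · intro hi p h1 h2
      exact lt_of_lt_of_le hi (Nat.sInf_le ⟨p, h1, h2, rfl⟩)
    · intro H
      -- The set is nonempty, so its `sInf` is attained and is not the junk value `0`.
      have hne : (-(a : ZMod r) * j).val ≠ 0 := by
        rw [Ne, ZMod.val_eq_zero]
        intro h0
        apply hj
        linear_combination (-(b : ZMod r)) * h0 - j * h
      obtain ⟨p, h1, h2, h3⟩ := Nat.sInf_mem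
        (s := {v : ℕ | ∃ p : ℕ, 1 ≤ p ∧ p ≤ (-(a : ZMod r) * j).val ∧ v = (p * b) % r})
        ⟨_, 1, le_rfl, Nat.one_le_iff_ne_zero.mpr hne, rfl⟩
      rw [h3]
      exact H p h1 h2

/-- The exchange `q ↦ [q·a]`: a violation `q` of the conclusion gives the violation `[q·a]` of the
hypothesis. -/
lemma lt_mod_of_lt_mod {r a b X Y : ℕ} (hab : a * b % r = 1) (hY : Y < r)
    (H : ∀ p : ℕ, 1 ≤ p → p ≤ X → Y < (p * b) % r) :
    ∀ q : ℕ, 1 ≤ q → q ≤ Y → X < (q * a) % r := by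
  intro q h1 h2
  by_contra! hX
  have hq : (q * a % r) * b % r = q := by
    rw [Nat.mod_mul_mod, mul_assoc, Nat.mul_mod, hab, mul_one, Nat.mod_mod,
      Nat.mod_eq_of_lt (by omega)]
  have hpos : 1 ≤ q * a % r := by
    rcases Nat.eq_zero_or_pos (q * a % r) with h0 | h0
    · simp [h0] at hq
      omega
    · exact h0
  have := H _ hpos hX
  omega

/-- `w_j · w_i ≠ 0` in `R_{r,a}` iff `φ(w_i) · φ(w_j) ≠ 0` in `R_{r,b}`. -/
lemma lt_KKm_swap (r a b : ℕ) [NeZero r] (hab : a * b % r = 1) (h : (a * b : ZMod r) = 1)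
    (i j : ZMod r) :
    i.val < KKm r a b j ↔ (-(a : ZMod r) * j).val < KKm r b a (-(a : ZMod r) * i) := by
  have hi : -(b : ZMod r) * (-(a : ZMod r) * i) = i := by linear_combination i * h
  rw [lt_KKm_iff r a b (by rw [mul_comm]; exact h), lt_KKm_iff r b a h, hi]
  exact ⟨lt_mod_of_lt_mod hab (ZMod.val_lt _),
    lt_mod_of_lt_mod (by rw [mul_comm]; exact hab) (ZMod.val_lt _)⟩

/-- the `k`-linear bijection `φ : R_{r,a} → R_{r,b}` with `φ(w_i) = w_{-a·i}` is an
algebra anti-isomorphism: `φ(w₀) = w₀` and `φ(u·v) = φ(v)·φ(u)`, i.e. `φ` is a `k`-algebra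
isomorphism from `(R_{r,a})ᵒᵖ` onto `R_{r,b}`. -/
theorem kalckKarmazyn_opposite (k : Type*) [Field k] (r a b : ℕ) [NeZero r]
    (ha : 0 < a) (har : a < r) (hcop : Nat.Coprime a r)
    (hb : 0 < b) (hbr : b < r) (hab : a * b % r = 1) :
    ∃ φ : (ZMod r → k) ≃ₗ[k] (ZMod r → k),
      (∀ i : ZMod r, φ (Pi.single i 1) = Pi.single (-(a : ZMod r) * i) 1) ∧
      φ (Pi.single 0 1) = Pi.single 0 1 ∧
      (∀ u v : ZMod r → k, φ (KKmul k r a b u v) = KKmul k r b a (φ v) (φ u)) := by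
  have h : (a * b : ZMod r) = 1 := by
    have := congrArg (Nat.cast : ℕ → ZMod r) hab
    simpa using this
  have hl : ∀ x : ZMod r, -(b : ZMod r) * (-(a : ZMod r) * x) = x := fun x => by
    linear_combination x * h
  have hr : ∀ x : ZMod r, -(a : ZMod r) * (-(b : ZMod r) * x) = x := fun x => by
    linear_combination x * h
  let e : ZMod r ≃ ZMod r := ⟨fun x => -(a : ZMod r) * x, fun x => -(b : ZMod r) * x, hl, hr⟩
  -- In coordinates, moving `w_i` to `w_{-a·i}` is precomposition with the inverse `x ↦ -b·x`.
  let φ : (ZMod r → k) ≃ₗ[k] (ZMod r → k) := LinearEquiv.funCongrLeft k k e.symm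
  have hφ : ∀ (f : ZMod r → k) (s : ZMod r), φ f s = f (-(b : ZMod r) * s) := fun _ _ => rfl
  have hsingle : ∀ i : ZMod r, φ (Pi.single i 1) = Pi.single (-(a : ZMod r) * i) 1 := by
    intro i
    ext s
    rw [hφ, Pi.single_apply, Pi.single_apply]
    congr 1
    refine propext ⟨fun hs => ?_, fun hs => ?_⟩
    · rw [← hs, hr]
    · rw [hs, hl]
  refine ⟨φ, hsingle, by simpa using hsingle 0, fun u v => ?_⟩
  ext s
  rw [hφ]
  unfold KKmul
  rw [Finset.sum_comm]
  refine Fintype.sum_equiv e _ _ fun i => Fintype.sum_equiv e _ _ fun j => ?_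
  change _ = if -(a : ZMod r) * i + -(a : ZMod r) * j = s ∧
    (-(a : ZMod r) * j).val < KKm r b a (-(a : ZMod r) * i)
    then φ v (-(a : ZMod r) * i) * φ u (-(a : ZMod r) * j) else 0
  rw [hφ, hφ, hl, hl, mul_comm (v i)]
  have hsum : j + i = -(b : ZMod r) * s ↔ -(a : ZMod r) * i + -(a : ZMod r) * j = s := by
    constructor
    · intro hs
      rw [← mul_add, add_comm, hs, hr]
    · intro hs
      rw [← hs, ← mul_add, hl, add_comm]
  simp only [hsum, lt_KKm_swap r a b hab h i j]
end

section
/- 𝒪 is an order in the matrix algebra: for every matrix B ∈ Mat_n(F[t]) there exists a nonzero polynomial g ∈ F[t] with g·B ∈ 𝒪; equivalently, 𝒪 ⊗_{F[t]} F(t) = Mat_n(F(t)), where F(t) is the field of rational functions. -/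
/-!
The `n²` matrices `M_ℓ` are linearly independent over `F[t]`, and `Mat_n(F[t])` is free of rank
`n²`; hence `B` together with the `M_ℓ` satisfies a nontrivial relation, in which the coefficient of
`B` cannot vanish.

Independence means that `A = 0` forces all `a_ℓ` to be `0`. The entry `A_{ij}` involves only
the `a_ℓ` with `ℓ ≡ j - i mod n`, so fix `d ≡ j - i` with `0 ≤ d < n`. Write `s_k = k q mod n`, so
that `[knq] = n s_k`, and label the row `i` by `x = s_i`, which runs through `{0, …, n - 1}` because
`q` is prime to `n`. For `d > 0`, unwinding the conditions on `ρ` shows that the entry is, up to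
sign and a factor `t`, the sum of `t^r a_{d+rn}` over `lo ≤ r < hi`. Here `lo` is the largest mark
`≤ x` among the residues of `-kq` with `0 ≤ k ≤ d`, and `hi` the smallest mark `> x` among those
with `d ≤ k ≤ n` (`kawEntry_lt`, `kawEntry_gt`). So the partial sums of `t^r a_{d+rn}` agree at `lo`
and `hi`. The graph on `{0, …, n}` with one edge `lo — hi` for each `x` is connected
(`potential_const`), hence the partial sums are constant and every term vanishes. The case `d = 0`
is a triangular system (`bandTerm_zero_eq_zero`).
-/

open Polynomial in
/-- The `(i,j)` entry (with `i, j : Fin n` representing the 1-based indices `i+1, j+1`) of the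
matrix `A ∈ Mat_n(F[t])` of Theorem 1.8 (Kawamata's order), for formal coefficients
`a : ZMod (n²) → F[t]`.  Here `[x]` is the representative of `x` modulo `n²` in
`{0,…,n²-1}`, and the conditions `< min` / `> max` over ranges of `k` are expressed as
universally quantified inequalities (vacuously true over empty ranges, which accounts for the
clause "either i = 1 or ..."). -/
noncomputable def kawEntry (F : Type*) [Field F] (n q : ℕ)
    (a : ZMod (n ^ 2) → Polynomial F) (i j : Fin n) : Polynomial F :=
  -- 1-based row and column indices
  let I : ℕ := (i : ℕ) + 1
  let J : ℕ := (j : ℕ) + 1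
  -- `[k·n·q] + k` as an integer
  let g : ℕ → ℤ := fun k => ((k * n * q) % n ^ 2 : ℕ) + (k : ℤ)
  -- `[i·n·q] + i` as an integer
  let e : ℤ := ((I * n * q) % n ^ 2 : ℕ) + (I : ℤ)
  -- `[i·n·q]` as an integer
  let c : ℤ := ((I * n * q) % n ^ 2 : ℕ)
  if I < J then
    (∑ ρ ∈ Finset.range n,
      if ((ρ * n : ℕ) : ℤ) < c ∧
          (∀ k ∈ Finset.Icc (I + 1) J, e < ((ρ * n : ℕ) : ℤ) + g k) then
        X ^ ρ * a (((J : ℤ) - (I : ℤ) + (ρ * n : ℕ) : ℤ) : ZMod (n ^ 2))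
      else 0)
    +
    (∑ ρ ∈ Finset.Icc 1 n,
      if c < ((ρ * n : ℕ) : ℤ) ∧
          (∀ k ∈ Finset.Icc 1 (I - 1), ((ρ * n : ℕ) : ℤ) - (n ^ 2 : ℕ) + g k < e) ∧
          (∀ k ∈ Finset.Icc J n, ((ρ : ℤ) - 1) * n - (n ^ 2 : ℕ) + g k < e) then
        X ^ (ρ - 1) * a (((J : ℤ) - (I : ℤ) + (ρ * n : ℕ) - (n : ℕ) : ℤ) : ZMod (n ^ 2))
      else 0)
  else if J < I then
    -(∑ ρ ∈ Finset.Icc 1 n,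
      if c < ((ρ * n : ℕ) : ℤ) ∧
          (∀ k ∈ Finset.Icc J (I - 1), ((ρ * n : ℕ) : ℤ) - (n ^ 2 : ℕ) + g k < e) then
        X ^ ρ * a (((J : ℤ) - (I : ℤ) + (ρ * n : ℕ) : ℤ) : ZMod (n ^ 2))
      else 0)
  else
    a 0 - ∑ ρ ∈ Finset.Icc 1 (n - 1),
      if c < ((ρ * n : ℕ) : ℤ) then X ^ ρ * a ((ρ * n : ℕ) : ZMod (n ^ 2)) else 0

/-- The matrix `M_ℓ ∈ Mat_n(F[t])`: the coefficient of `a_ℓ` in the matrix `A`. -/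
noncomputable def kawM (F : Type*) [Field F] (n q : ℕ) (ℓ : ZMod (n ^ 2)) :
    Matrix (Fin n) (Fin n) (Polynomial F) :=
  Matrix.of fun i j => kawEntry F n q (fun ℓ' => if ℓ' = ℓ then 1 else 0) i j

/-- Kawamata's order `𝒪 ⊆ Mat_n(F[t])`: the `F[t]`-submodule spanned by the `M_ℓ`. -/
noncomputable def kawOrder (F : Type*) [Field F] (n q : ℕ) :
    Submodule (Polynomial F) (Matrix (Fin n) (Fin n) (Polynomial F)) :=
  Submodule.span (Polynomial F) (Set.range (kawM F n q))

/-! ### Residues of multiples of `q` -/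

/-- Since `q` is invertible modulo `n`, every residue `-y` is `k * q` for some `k ∈ {1, …, n}`. -/
lemma exists_mul_dvd (n q : ℕ) (hn : 2 ≤ n) (hcop : Nat.Coprime q n) (y : ℤ) :
    ∃ k : ℕ, 1 ≤ k ∧ k ≤ n ∧ (n : ℤ) ∣ y + k * q := by
  have : NeZero n := ⟨by omega⟩
  obtain ⟨u, hu⟩ := (ZMod.isUnit_iff_coprime q n).2 hcop
  have key : ∀ k : ℕ, (k : ZMod n) = -(y : ZMod n) * ((u⁻¹ : (ZMod n)ˣ) : ZMod n) →
      (n : ℤ) ∣ y + k * q := by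
    intro k hk
    rw [← ZMod.intCast_zmod_eq_zero_iff_dvd]
    push_cast
    rw [hk, ← hu, mul_assoc, Units.inv_mul]
    ring
  set z : ZMod n := -(y : ZMod n) * ((u⁻¹ : (ZMod n)ˣ) : ZMod n) with hz
  have hlt := ZMod.val_lt z
  rcases Nat.eq_zero_or_pos z.val with h0 | hpos
  · refine ⟨n, by omega, le_rfl, key n ?_⟩
    rw [(ZMod.val_eq_zero z).1 h0]
    simp
  · exact ⟨z.val, hpos, hlt.le, key _ (ZMod.natCast_zmod_val z)⟩

/-- Each `x < n` is the residue `s_I = I q mod n` of exactly one row index `I`; existence is enough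
here. -/
lemma exists_row (n q : ℕ) (hn : 2 ≤ n) (hcop : Nat.Coprime q n) (x : ℕ) (hx : x < n) :
    ∃ i : Fin n, (((i : ℕ) + 1) * q) % n = x := by
  obtain ⟨k, h1, h2, h3⟩ := exists_mul_dvd n q hn hcop (-x)
  refine ⟨⟨k - 1, by omega⟩, ?_⟩
  have hk : k - 1 + 1 = k := by omega
  simp only [hk]
  have : x ≡ k * q [MOD n] := by
    rw [← Int.natCast_modEq_iff]
    refine Int.modEq_iff_dvd.2 ?_
    push_cast
    convert h3 using 1
    ring
  rw [← this, Nat.mod_eq_of_lt hx]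

/-! ### A connectivity lemma -/

/-- Join, for each `x < n`, the largest mark `lo ≤ x` of `A` to the smallest mark `hi > x` of `C`.
If `A` and `C` together cover `{0, …, n}`, this graph on `{0, …, n}` is connected, so a function
`S` that is constant along its edges is constant. Connectedness holds because the edges of `x` and
`x + 1` always share a vertex: if `x + 1 ∉ A` they have the same `lo`, if `x + 1 ∉ C` the same `hi`,
and otherwise `x + 1` belongs to both. -/
lemma potential_const {R : Type*} (n : ℕ) (A C : ℕ → Prop) (S : ℕ → R)
    (hA0 : A 0) (hCn : C n) (hAC : ∀ y ≤ n, A y ∨ C y)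
    (H : ∀ x lo hi, x < n → lo ≤ x → x < hi → hi ≤ n → A lo → C hi →
      (∀ y, A y → y ≤ x → y ≤ lo) → (∀ y, C y → x < y → hi ≤ y) → S lo = S hi) :
    ∀ y ≤ n, S y = S 0 := by
  classical
  have exlo : ∀ x, ∃ lo, lo ≤ x ∧ A lo ∧ ∀ y, A y → y ≤ x → y ≤ lo := fun x =>
    ⟨Nat.findGreatest A x, Nat.findGreatest_le x,
      Nat.findGreatest_spec (Nat.zero_le x) hA0, fun y hy hyx => Nat.le_findGreatest hyx hy⟩
  have exhi : ∀ x < n, ∃ hi, x < hi ∧ hi ≤ n ∧ C hi ∧ ∀ y, C y → x < y → hi ≤ y := by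
    intro x hx
    have hex : ∃ hi, C hi ∧ x < hi := ⟨n, hCn, hx⟩
    exact ⟨Nat.find hex, (Nat.find_spec hex).2, Nat.find_min' hex ⟨hCn, hx⟩,
      (Nat.find_spec hex).1, fun y hy hxy => Nat.find_min' hex ⟨hy, hxy⟩⟩
  have P : ∀ x, x < n → ∀ lo, lo ≤ x → A lo → (∀ y, A y → y ≤ x → y ≤ lo) → S lo = S 0 := by
    intro x
    induction x with
    | zero =>
      intro _ lo hlo _ _
      rw [Nat.le_zero.1 hlo]
    | succ x ih =>
      intro hx lo' hlo' hA' hmax'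
      rcases Nat.lt_or_ge x lo' with hgt | hle
      · obtain rfl : lo' = x + 1 := by omega
        obtain ⟨lo, hlo, hA, hmax⟩ := exlo x
        obtain ⟨hi, h1, h2, h3, h4⟩ := exhi x (by omega)
        have e1 := ih (by omega) lo hlo hA hmax
        have e2 := H x lo hi (by omega) hlo h1 h2 hA h3 hmax h4
        rcases Nat.lt_or_ge (x + 1) hi with h5 | h5
        · have e3 := H (x + 1) (x + 1) hi hx le_rfl h5 h2 hA' h3 hmax'
            (fun y hy hxy => h4 y hy (by omega))
          rw [e3, ← e2, e1]
        · obtain rfl : hi = x + 1 := by omega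
          rw [← e2, e1]
      · exact ih (by omega) lo' hle hA' (fun y hy hyx => hmax' y hy (by omega))
  intro y hy
  rcases Nat.eq_zero_or_pos y with rfl | hpos
  · rfl
  by_cases hC : C y
  · obtain ⟨lo, hlo, hA, hmax⟩ := exlo (y - 1)
    rw [← P (y - 1) (by omega) lo hlo hA hmax]
    exact (H (y - 1) lo y (by omega) hlo (by omega) hy hA hC hmax
      (fun z _ hz => by omega)).symm
  · have hAy := (hAC y hy).resolve_right hC
    have : y ≠ n := fun h => hC (h ▸ hCn)
    exact P y (by omega) y le_rfl hAy (fun z _ hz => hz)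

/-! ### The conditions on `ρ` cut out an interval -/

/-- Moving `k'` rows cyclically down from row `I` adds `k' q` to the residue `s_I = I q mod n`. -/
lemma mod_shift (n q I k k' : ℕ) (h : k = I + k' ∨ k + n = I + k') :
    (n : ℤ) ∣ ((k * q % n : ℕ) : ℤ) - ((I * q % n : ℕ) : ℤ) - k' * q := by
  rw [← ZMod.intCast_zmod_eq_zero_iff_dvd]
  have h' : (k : ZMod n) = I + k' := by
    rcases h with h | h
    · rw [h]; push_cast; ring
    · have := congrArg (Nat.cast : ℕ → ZMod n) h
      push_cast at this
      simpa using this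
  push_cast
  rw [h']
  ring

/-- In the notation `[x]` for residues modulo `n²`, this is `[knq] = n s_k` with
`s_k = k q mod n`. -/
lemma mod_sq (n q k : ℕ) : (k * n * q) % n ^ 2 = n * (k * q % n) := by
  rw [pow_two, show k * n * q = n * (k * q) by ring, Nat.mul_mod_mul_left]

/-- The marks `y ≡ -kq mod n` with `0 ≤ k ≤ d`. In a row with residue `x`, the largest such `y ≤ x`
is the lower end of the interval of exponents on the cyclic diagonal `j - i ≡ d`. -/
def loMark (n q d y : ℕ) : Prop := ∃ k, k ≤ d ∧ (n : ℤ) ∣ y + k * q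

/-- The marks `y ≡ -kq mod n` with `d ≤ k ≤ n`. In a row with residue `x`, the smallest such `y > x`
is the (excluded) upper end of the interval of exponents on the cyclic diagonal `j - i ≡ d`. -/
def hiMark (n q d y : ℕ) : Prop := ∃ k, d ≤ k ∧ k ≤ n ∧ (n : ℤ) ∣ y + k * q

lemma int_eq_zero_of_dvd {n z : ℤ} (h : n ∣ z) (h1 : -n < z) (h2 : z < n) : z = 0 := by
  exact Int.eq_zero_of_abs_lt_dvd h (abs_lt.2 ⟨h1, h2⟩)

section
variable {n q d I x lo hi : ℕ}

/-- For a row `I` with residue `x`, the minimum condition of the first sum above the diagonal says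
`lo ≤ r`. Comparing multiples of `n` up to the small corrections `I`, `k`, it reads
`x - s_k ≤ r` for the rows `k` just after `I`, and the positive numbers `x - s_k` are marks. -/
lemma low_cond (hn : 2 ≤ n) (hd : d < n) (hx : I * q % n = x) (hxn : x < n)
    (hlo : lo ≤ x) (hA : loMark n q d lo) (hmax : ∀ y, loMark n q d y → y ≤ x → y ≤ lo)
    (r : ℕ) :
    (∀ k ∈ Finset.Icc (I + 1) (I + d),
      (n : ℤ) * x + I < (r : ℤ) * n + ((n : ℤ) * ((k * q % n : ℕ) : ℤ) + k)) ↔ lo ≤ r := by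
  constructor
  · intro h
    obtain ⟨k0, hk0, hdv⟩ := hA
    rcases Nat.eq_zero_or_pos lo with rfl | hpos
    · omega
    rcases Nat.eq_zero_or_pos k0 with rfl | hk0p
    · have := int_eq_zero_of_dvd (by simpa using hdv) (by omega) (by omega)
      omega
    have h1 := h (I + k0) (Finset.mem_Icc.2 ⟨by omega, by omega⟩)
    have h2 := mod_shift n q I (I + k0) k0 (Or.inl rfl)
    have h3 : ((I + k0) * q % n) < n := Nat.mod_lt _ (by omega)
    rw [hx] at h2
    generalize ((I + k0) * q % n) = s at *
    have h4 : (s : ℤ) - x + lo = 0 := by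
      apply int_eq_zero_of_dvd (n := n) _ (by omega) (by omega)
      have := Int.dvd_add h2 hdv
      convert this using 1
      ring
    have h5 : (s : ℤ) = x - lo := by linarith
    rw [h5] at h1
    push_cast at h1
    have : (lo : ℤ) < r + 1 := by
      have hnpos : (0 : ℤ) < n := by omega
      have : (k0 : ℤ) < n := by omega
      by_contra! hc
      nlinarith
    omega
  · intro hlr k hk
    rw [Finset.mem_Icc] at hk
    have h3 : (k * q % n) < n := Nat.mod_lt _ (by omega)
    have h2 := mod_shift n q I k (k - I) (Or.inl (by omega))
    rw [hx] at h2
    generalize (k * q % n) = s at *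
    -- if `s < x`, then `x - s` is a mark, hence at most `lo`
    have : x ≤ r + s := by
      rcases Nat.lt_or_ge s x with hs | hs
      · have := hmax (x - s) ⟨k - I, by omega, by
          rw [← Int.dvd_neg]
          convert h2 using 1
          push_cast [hs.le]
          ring⟩ (by omega)
        omega
      · omega
    have h6 : (x : ℤ) ≤ r + s := by exact_mod_cast this
    have h7 : (I : ℤ) < k := by omega
    nlinarith

/-- If `r < hi`, every row `k = I + k'` (cyclically) with `d ≤ k' ≤ n` satisfies
`r + 1 ≤ n + x - s_k`: either `s_k ≤ x`, or `n + x - s_k` is a mark beyond `x`. -/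
lemma high_forward (hn : 2 ≤ n) (hx : I * q % n = x)
    (hmin : ∀ y, hiMark n q d y → x < y → hi ≤ y)
    (r : ℕ) (hr : r < hi) (hhi : hi ≤ n) (k k' : ℕ) (hk' : k = I + k' ∨ k + n = I + k')
    (hdk : d ≤ k') (hkn : k' ≤ n) :
    (r : ℤ) + 1 ≤ n + x - ((k * q % n : ℕ) : ℤ) := by
  have h3 : (k * q % n) < n := Nat.mod_lt _ (by omega)
  have h2 := mod_shift n q I k k' hk'
  rw [hx] at h2
  generalize (k * q % n) = s at *
  rcases Nat.lt_or_ge x s with hs | hs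
  · have := hmin (n + x - s) ⟨k', hdk, hkn, by
      rw [← Int.dvd_neg]
      have := Int.dvd_sub h2 (Int.dvd_refl (n : ℤ))
      convert this using 1
      push_cast [show s ≤ n + x by omega]
      ring⟩ (by omega)
    omega
  · omega

/-- The row `k = I + k'` (cyclically) that makes `hi` a mark has residue `s_k = n + x - hi`. -/
lemma high_backward (hn : 2 ≤ n) (hx : I * q % n = x)
    (hhx : x < hi) (hhi : hi ≤ n) (k k' : ℕ)
    (hdv : (n : ℤ) ∣ hi + k' * q) (hk' : k = I + k' ∨ k + n = I + k') :
    ((k * q % n : ℕ) : ℤ) = n + x - hi := by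
  have h3 : (k * q % n) < n := Nat.mod_lt _ (by omega)
  have h2 := mod_shift n q I k k' hk'
  rw [hx] at h2
  generalize (k * q % n) = s at *
  have h4 : (s : ℤ) - x + hi - n = 0 := by
    apply int_eq_zero_of_dvd (n := n) _ (by omega) (by omega)
    have := Int.dvd_sub (Int.dvd_add h2 hdv) (Int.dvd_refl (n : ℤ))
    convert this using 1
    ring
  linarith

/-- A mark `hi` given by `k = n` is a multiple of `n`, hence `n` itself; in this case the upper bound
`r < hi` is automatic. -/
lemma hi_eq_or (hn : 2 ≤ n) (hhx : x < hi) (hhi : hi ≤ n) (hC : hiMark n q d hi) :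
    hi = n ∨ ∃ k, d ≤ k ∧ k < n ∧ (n : ℤ) ∣ hi + k * q := by
  obtain ⟨k, h1, h2, h3⟩ := hC
  rcases Nat.lt_or_ge k n with h | h
  · exact Or.inr ⟨k, h1, h, h3⟩
  · left
    obtain rfl : k = n := by omega
    have : (k : ℤ) ∣ hi := (Int.dvd_add_left (Dvd.intro _ rfl)).1 h3
    have := Int.le_of_dvd (by omega) this
    omega

/-- Above the diagonal, with `J = I + d ≤ n`, the two maximum conditions of the second sum, taken at
`ρ = r + 1`, together say `r < hi`. -/
lemma high_cond_lt (hn : 2 ≤ n) (hd : 1 ≤ d) (hI : 1 ≤ I) (hId : I + d ≤ n)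
    (hx : I * q % n = x) (hxn : x < n)
    (hhx : x < hi) (hhi : hi ≤ n) (hC : hiMark n q d hi)
    (hmin : ∀ y, hiMark n q d y → x < y → hi ≤ y) (r : ℕ) (hrn : r < n) :
    ((∀ k ∈ Finset.Icc 1 (I - 1), ((r : ℤ) + 1) * n - (n : ℤ) ^ 2 +
        ((n : ℤ) * ((k * q % n : ℕ) : ℤ) + k) < (n : ℤ) * x + I) ∧
      (∀ k ∈ Finset.Icc (I + d) n, (r : ℤ) * n - (n : ℤ) ^ 2 +
        ((n : ℤ) * ((k * q % n : ℕ) : ℤ) + k) < (n : ℤ) * x + I)) ↔ r < hi := by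
  have hnpos : (0 : ℤ) < n := by omega
  constructor
  · rintro ⟨h1, h2⟩
    rcases hi_eq_or hn hhx hhi hC with rfl | ⟨k0, h3, h4, h5⟩
    · exact hrn
    rcases Nat.lt_or_ge n (I + k0) with h6 | h6
    · have := high_backward hn hx hhx hhi (I + k0 - n) k0 h5 (Or.inr (by omega))
      have h7 := h1 (I + k0 - n) (Finset.mem_Icc.2 ⟨by omega, by omega⟩)
      rw [this] at h7
      by_contra! hc
      have hc' : (hi : ℤ) ≤ r := by exact_mod_cast hc
      have h8 : ((I + k0 - n : ℕ) : ℤ) = I + k0 - n := by omega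
      rw [h8] at h7
      nlinarith
    · have := high_backward hn hx hhx hhi (I + k0) k0 h5 (Or.inl (by omega))
      have h7 := h2 (I + k0) (Finset.mem_Icc.2 ⟨by omega, by omega⟩)
      rw [this] at h7
      by_contra! hc
      have hc' : (hi : ℤ) ≤ r := by exact_mod_cast hc
      push_cast at h7
      nlinarith
  · intro hr
    constructor
    · intro k hk
      rw [Finset.mem_Icc] at hk
      have := high_forward hn hx hmin r hr hhi k (k + n - I)
        (Or.inr (by omega)) (by omega) (by omega)
      have h7 : (k : ℤ) < I := by omega
      nlinarith
    · intro k hk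
      rw [Finset.mem_Icc] at hk
      have := high_forward hn hx hmin r hr hhi k (k - I)
        (Or.inl (by omega)) (by omega) (by omega)
      have h7 : (k : ℤ) < I + n := by omega
      nlinarith

/-- Below the diagonal, with `J = I + d - n < I`, the maximum condition at `ρ = r + 1` says
`r < hi`. -/
lemma high_cond_gt (hn : 2 ≤ n) (hd : d < n) (hI : I ≤ n) (hId : n < I + d)
    (hx : I * q % n = x) (hxn : x < n)
    (hhx : x < hi) (hhi : hi ≤ n) (hC : hiMark n q d hi)
    (hmin : ∀ y, hiMark n q d y → x < y → hi ≤ y) (r : ℕ) (hrn : r < n) :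
    (∀ k ∈ Finset.Icc (I + d - n) (I - 1), ((r : ℤ) + 1) * n - (n : ℤ) ^ 2 +
        ((n : ℤ) * ((k * q % n : ℕ) : ℤ) + k) < (n : ℤ) * x + I) ↔ r < hi := by
  have hnpos : (0 : ℤ) < n := by omega
  constructor
  · intro h1
    rcases hi_eq_or hn hhx hhi hC with rfl | ⟨k0, h3, h4, h5⟩
    · exact hrn
    have := high_backward hn hx hhx hhi (I + k0 - n) k0 h5 (Or.inr (by omega))
    have h7 := h1 (I + k0 - n) (Finset.mem_Icc.2 ⟨by omega, by omega⟩)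
    rw [this] at h7
    by_contra! hc
    have hc' : (hi : ℤ) ≤ r := by exact_mod_cast hc
    have h8 : ((I + k0 - n : ℕ) : ℤ) = I + k0 - n := by omega
    rw [h8] at h7
    nlinarith
  · intro hr k hk
    rw [Finset.mem_Icc] at hk
    have := high_forward hn hx hmin r hr hhi k (k + n - I)
      (Or.inr (by omega)) (by omega) (by omega)
    have h7 : (k : ℤ) < I := by omega
    nlinarith

/-- Below the diagonal the row `n`, whose residue is `0`, lies among the `d` rows after `I`, so `x`
itself is a mark and `lo = x`. -/
lemma lo_eq_of_wrap (hI : I ≤ n) (hId : n < I + d)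
    (hx : I * q % n = x) (hlo : lo ≤ x)
    (hmax : ∀ y, loMark n q d y → y ≤ x → y ≤ lo) : lo = x := by
  have h2 := mod_shift n q I n (n - I) (Or.inl (by omega))
  refine le_antisymm hlo (hmax x ⟨n - I, by omega, ?_⟩ le_rfl)
  rw [hx, Nat.mul_mod_right] at h2
  rw [← Int.dvd_neg]
  convert h2 using 1
  push_cast
  ring

end

section
open Polynomial

/-! ### Entries of `A` as interval sums -/

lemma sum_Icc_one {M : Type*} [AddCommMonoid M] (n : ℕ) (f : ℕ → M) :
    ∑ ρ ∈ Finset.Icc 1 n, f ρ = ∑ r ∈ Finset.range n, f (r + 1) := by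
  induction n with
  | zero => simp
  | succ n ih => rw [Finset.sum_Icc_succ_top (by omega), ih, Finset.sum_range_succ]

variable {F : Type*} [Field F] {n q : ℕ}

/-- The `r`-th term `t^r a_{d + rn}` occurring on the cyclic diagonal `j - i ≡ d mod n`. -/
noncomputable def bandTerm (a : ZMod (n ^ 2) → F[X]) (d r : ℕ) : F[X] :=
  X ^ r * a ((d + r * n : ℕ) : ZMod (n ^ 2))

/-- Above the diagonal the first sum covers the exponents in `[lo, x)` and the second those in
`[x, hi)`, after the shift `ρ = r + 1`. -/
lemma kawEntry_lt (a : ZMod (n ^ 2) → F[X]) {d x lo hi : ℕ} (hn : 2 ≤ n) (hd : 1 ≤ d)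
    (i : Fin n) (hid : (i : ℕ) + d < n)
    (hx : ((i : ℕ) + 1) * q % n = x) (hxn : x < n)
    (hlo : lo ≤ x) (hhx : x < hi) (hhi : hi ≤ n)
    (hA : loMark n q d lo) (hC : hiMark n q d hi)
    (hmax : ∀ y, loMark n q d y → y ≤ x → y ≤ lo)
    (hmin : ∀ y, hiMark n q d y → x < y → hi ≤ y) :
    kawEntry F n q a i ⟨i + d, hid⟩ = ∑ r ∈ Finset.Ico lo hi, bandTerm a d r := by
  have hnpos : (0 : ℤ) < n := by omega
  have hIJ : (i : ℕ) + d + 1 = i + 1 + d := by omega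
  rw [← Finset.sum_Ico_consecutive _ hlo hhx.le]
  unfold kawEntry
  simp only [mod_sq, hx, hIJ]
  rw [if_pos (by omega), sum_Icc_one]
  congr 1
  · rw [show Finset.Ico lo x = (Finset.range n).filter (fun r => lo ≤ r ∧ r < x) by
      ext r; simp only [Finset.mem_Ico, Finset.mem_filter, Finset.mem_range]; omega,
      Finset.sum_filter]
    refine Finset.sum_congr rfl fun r _ => ?_
    have hiff : (((r * n : ℕ) : ℤ) < ((n * x : ℕ) : ℤ) ∧
        ∀ k ∈ Finset.Icc ((i : ℕ) + 1 + 1) ((i : ℕ) + 1 + d),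
          ((n * x : ℕ) : ℤ) + ((i + 1 : ℕ) : ℤ) <
            ((r * n : ℕ) : ℤ) + (((n * (k * q % n) : ℕ) : ℤ) + (k : ℤ))) ↔
        (lo ≤ r ∧ r < x) := by
      have h1 : ((r * n : ℕ) : ℤ) < ((n * x : ℕ) : ℤ) ↔ r < x := by
        rw [Nat.cast_lt, mul_comm r n]
        exact Nat.mul_lt_mul_left (by omega)
      rw [h1, and_comm]
      refine and_congr_left fun _ => ?_
      rw [← low_cond hn (by omega) hx hxn hlo hA hmax r]
      push_cast
      rfl
    refine if_congr hiff ?_ rfl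
    unfold bandTerm
    congr 2
    push_cast
    ring
  · rw [show Finset.Ico x hi = (Finset.range n).filter (fun r => x ≤ r ∧ r < hi) by
      ext r; simp only [Finset.mem_Ico, Finset.mem_filter, Finset.mem_range]; omega,
      Finset.sum_filter]
    refine Finset.sum_congr rfl fun r hr => ?_
    have hrn := Finset.mem_range.1 hr
    refine if_congr (and_congr ?_ ?_) ?_ rfl
    · rw [Nat.cast_lt, mul_comm (r + 1) n, Nat.mul_lt_mul_left (by omega)]
      omega
    · rw [← high_cond_lt hn hd (by omega) (by omega) hx hxn hhx hhi hC hmin r hrn]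
      push_cast
      simp
    · unfold bandTerm
      congr 2
      push_cast
      ring

/-- Below the diagonal the entry is again an interval sum, up to the sign and one extra factor `t`
from the wrap-around. -/
lemma kawEntry_gt (a : ZMod (n ^ 2) → F[X]) {d x lo hi : ℕ} (hn : 2 ≤ n) (hd : d < n)
    (i : Fin n) (hid : n ≤ (i : ℕ) + d)
    (hx : ((i : ℕ) + 1) * q % n = x) (hxn : x < n)
    (hlo : lo ≤ x) (hhx : x < hi) (hhi : hi ≤ n)
    (hC : hiMark n q d hi)
    (hmax : ∀ y, loMark n q d y → y ≤ x → y ≤ lo)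
    (hmin : ∀ y, hiMark n q d y → x < y → hi ≤ y) :
    kawEntry F n q a i ⟨i + d - n, by omega⟩ =
      -X * ∑ r ∈ Finset.Ico lo hi, bandTerm a d r := by
  have hnpos : (0 : ℤ) < n := by omega
  have hi' := i.isLt
  obtain rfl := lo_eq_of_wrap (by omega) (by omega) hx hlo hmax
  have hIJ : (i : ℕ) + d - n + 1 = i + 1 + d - n := by omega
  unfold kawEntry
  simp only [mod_sq, hx, hIJ]
  rw [if_neg (by omega), if_pos (by omega), sum_Icc_one, neg_mul, Finset.mul_sum]
  congr 1
  rw [show Finset.Ico lo hi = (Finset.range n).filter (fun r => lo ≤ r ∧ r < hi) by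
    ext r; simp only [Finset.mem_Ico, Finset.mem_filter, Finset.mem_range]; omega,
    Finset.sum_filter]
  refine Finset.sum_congr rfl fun r hr => ?_
  have hrn := Finset.mem_range.1 hr
  refine if_congr (and_congr ?_ ?_) ?_ rfl
  · rw [Nat.cast_lt, mul_comm (r + 1) n, Nat.mul_lt_mul_left (by omega)]
    omega
  · rw [← high_cond_gt hn hd (by omega) (by omega) hx hxn hhx hhi hC hmin r hrn]
    push_cast
    rfl
  · unfold bandTerm
    rw [pow_succ', mul_assoc]
    congr 3
    rw [Nat.cast_sub (by omega)]
    push_cast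
    ring

/-! ### The kernel of `a ↦ A` is trivial -/

/-- If `A = 0`, the partial sums of the terms on a cyclic diagonal agree at both ends of each
row's interval, so they are constant by `potential_const`. -/
lemma bandTerm_eq_zero_of_pos (hn : 2 ≤ n) (hcop : Nat.Coprime q n) (a : ZMod (n ^ 2) → F[X])
    (h : ∀ i j, kawEntry F n q a i j = 0) {d : ℕ} (hd : 1 ≤ d) (hdn : d < n) {r : ℕ}
    (hr : r < n) : bandTerm a d r = 0 := by
  set S : ℕ → F[X] := fun y => ∑ r ∈ Finset.range y, bandTerm a d r with hS
  have hconst : ∀ y ≤ n, S y = S 0 := by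
    refine potential_const n (loMark n q d) (hiMark n q d) S ⟨0, by omega, by simp⟩
      ⟨n, by omega, le_rfl, ⟨1 + q, by ring⟩⟩ ?_ ?_
    · intro y _
      obtain ⟨k, h1, h2, h3⟩ := exists_mul_dvd n q hn hcop y
      rcases le_total k d with hkd | hkd
      · exact Or.inl ⟨k, hkd, h3⟩
      · exact Or.inr ⟨k, hkd, h2, h3⟩
    · intro x lo hi hxn hlo hhx hhi hA hC hmax hmin
      obtain ⟨i, hx⟩ := exists_row n q hn hcop x hxn
      have h0 : ∑ r ∈ Finset.Ico lo hi, bandTerm a d r = 0 := by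
        rcases Nat.lt_or_ge ((i : ℕ) + d) n with hid | hid
        · rw [← kawEntry_lt a hn hd i hid hx hxn hlo hhx hhi hA hC hmax hmin, h]
        · have := kawEntry_gt a hn hdn i hid hx hxn hlo hhx hhi hC hmax hmin
          rw [h] at this
          exact (mul_eq_zero.1 this.symm).resolve_left (neg_ne_zero.2 X_ne_zero)
      rw [Finset.sum_Ico_eq_sub _ (by omega), sub_eq_zero] at h0
      exact h0.symm
  have h1 := hconst (r + 1) hr
  rw [← hconst r hr.le] at h1
  simpa [hS, Finset.sum_range_succ] using h1

/-- On the main diagonal the row with residue `x` reads `a₀ - ∑_{x < ρ < n} t^ρ a_{ρn}`. The row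
`x = n - 1` gives `a₀ = 0`, and subtracting consecutive rows isolates each other term. -/
lemma bandTerm_zero_eq_zero (hn : 2 ≤ n) (hcop : Nat.Coprime q n) (a : ZMod (n ^ 2) → F[X])
    (h : ∀ i j, kawEntry F n q a i j = 0) {r : ℕ} (hr : r < n) : bandTerm a 0 r = 0 := by
  have key : ∀ x < n, a 0 = ∑ ρ ∈ Finset.Ico (x + 1) n, bandTerm a 0 ρ := by
    intro x hxn
    obtain ⟨i, hx⟩ := exists_row n q hn hcop x hxn
    have := h i i
    unfold kawEntry at this
    simp only [mod_sq, hx, lt_irrefl, if_false] at this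
    rw [sub_eq_zero.1 this,
      show Finset.Ico (x + 1) n = (Finset.Icc 1 (n - 1)).filter (fun r => x < r) by
        ext r; simp only [Finset.mem_Ico, Finset.mem_filter, Finset.mem_Icc]; omega,
      Finset.sum_filter]
    refine Finset.sum_congr rfl fun ρ _ => if_congr ?_ ?_ rfl
    · rw [Nat.cast_lt, mul_comm ρ n, Nat.mul_lt_mul_left (by omega)]
    · simp [bandTerm]
  rcases Nat.eq_zero_or_pos r with rfl | hpos
  · have := key (n - 1) (by omega)
    rw [show n - 1 + 1 = n by omega, Finset.Ico_self, Finset.sum_empty] at this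
    simp [bandTerm, this]
  · have h1 := key (r - 1) (by omega)
    rw [show r - 1 + 1 = r by omega, Finset.sum_eq_sum_Ico_succ_bot hr, ← key r hr] at h1
    simpa using h1

lemma eq_zero_of_kawEntry (hn : 2 ≤ n) (hcop : Nat.Coprime q n) (a : ZMod (n ^ 2) → F[X])
    (h : ∀ i j, kawEntry F n q a i j = 0) : a = 0 := by
  have : NeZero (n ^ 2) := ⟨by positivity⟩
  funext ℓ
  have hlt := ZMod.val_lt ℓ
  have hr : ℓ.val / n < n := by
    rw [Nat.div_lt_iff_lt_mul (by omega), ← pow_two]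
    exact hlt
  have hd : ℓ.val % n < n := Nat.mod_lt _ (by omega)
  have hb : bandTerm a (ℓ.val % n) (ℓ.val / n) = 0 := by
    rcases Nat.eq_zero_or_pos (ℓ.val % n) with h0 | hpos
    · rw [h0]
      exact bandTerm_zero_eq_zero hn hcop a h hr
    · exact bandTerm_eq_zero_of_pos hn hcop a h hpos hd hr
  unfold bandTerm at hb
  rw [Nat.mod_add_div', ZMod.natCast_zmod_val] at hb
  exact (mul_eq_zero.1 hb).resolve_left (pow_ne_zero _ X_ne_zero)

/-! ### Linear independence -/

lemma kawEntry_add (a b : ZMod (n ^ 2) → F[X]) (i j : Fin n) :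
    kawEntry F n q (a + b) i j = kawEntry F n q a i j + kawEntry F n q b i j := by
  unfold kawEntry
  simp only [Pi.add_apply, mul_add]
  split_ifs
  · simp only [ite_add_zero, Finset.sum_add_distrib]; abel
  · simp only [ite_add_zero, Finset.sum_add_distrib]; ring
  · simp only [ite_add_zero, Finset.sum_add_distrib]; ring

lemma kawEntry_smul (c : F[X]) (a : ZMod (n ^ 2) → F[X]) (i j : Fin n) :
    kawEntry F n q (c • a) i j = c * kawEntry F n q a i j := by
  unfold kawEntry
  simp only [Pi.smul_apply, smul_eq_mul, mul_left_comm _ c]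
  split_ifs
  · simp only [mul_add, Finset.mul_sum, mul_ite, mul_zero]
  · simp only [mul_neg, Finset.mul_sum, mul_ite, mul_zero]
  · simp only [mul_sub, Finset.mul_sum, mul_ite, mul_zero]

variable (F n q) in
/-- The `F[t]`-linear map sending a coefficient family `a` to the matrix `A`. -/
noncomputable def kawLin :
    (ZMod (n ^ 2) → F[X]) →ₗ[F[X]] Matrix (Fin n) (Fin n) F[X] where
  toFun a := Matrix.of (kawEntry F n q a)
  map_add' a b := by
    ext1 i j
    exact kawEntry_add a b i j
  map_smul' c a := by
    ext1 i j
    exact kawEntry_smul c a i j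

lemma kawM_linearIndependent (hn : 2 ≤ n) (hcop : Nat.Coprime q n) :
    LinearIndependent F[X] (kawM F n q) := by
  have : NeZero (n ^ 2) := ⟨by positivity⟩
  have hinj : LinearMap.ker (kawLin F n q) = ⊥ := by
    rw [LinearMap.ker_eq_bot']
    intro a ha
    exact eq_zero_of_kawEntry hn hcop a fun i j => congrFun (congrFun ha i) j
  have heq : kawM F n q = kawLin F n q ∘ Pi.basisFun F[X] (ZMod (n ^ 2)) := by
    funext ℓ
    simp only [Function.comp, Pi.basisFun_apply, kawM, kawLin, LinearMap.coe_mk, AddHom.coe_mk]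
    congr
    funext i j
    congr
    funext ℓ'
    rw [Pi.single_apply]
  rw [heq]
  exact (Pi.basisFun F[X] (ZMod (n ^ 2))).linearIndependent.map' _ hinj

end

/-- `𝒪` is an order in the matrix algebra: every `B ∈ Mat_n(F[t])` admits a
nonzero `g ∈ F[t]` with `g·B ∈ 𝒪`; equivalently, `𝒪 ⊗_{F[t]} F(t) = Mat_n(F(t))`. -/
theorem kawOrder_is_order (F : Type*) [Field F] (n q : ℕ)
    (hq : 0 < q) (hqn : q < n) (hcop : Nat.Coprime q n) :
    ∀ B : Matrix (Fin n) (Fin n) (Polynomial F),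
      ∃ g : Polynomial F, g ≠ 0 ∧ g • B ∈ kawOrder F n q := by
  intro B
  have hn : 2 ≤ n := by omega
  have : NeZero (n ^ 2) := ⟨by positivity⟩
  have hli := kawM_linearIndependent (F := F) hn hcop
  by_contra! hB
  -- without a relation `g • B ∈ 𝒪`, adding `B` to the `M_ℓ` would give `n² + 1` independent matrices
  have hli' : LinearIndependent (Polynomial F)
      (fun o : Option (ZMod (n ^ 2)) => o.elim B (kawM F n q)) := by
    rw [Fintype.linearIndependent_iff]
    intro c hc
    rw [Fintype.sum_option] at hc
    simp only [Option.elim] at hc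
    have h0 : c none = 0 := by
      by_contra hne
      refine hB _ hne ?_
      rw [eq_neg_of_add_eq_zero_left hc]
      exact neg_mem (sum_mem fun ℓ _ =>
        Submodule.smul_mem _ _ (Submodule.subset_span ⟨ℓ, rfl⟩))
    rw [h0, zero_smul, zero_add] at hc
    rintro (_ | ℓ)
    · exact h0
    · exact Fintype.linearIndependent_iff.1 hli (fun ℓ => c (some ℓ)) hc ℓ
  have hcard := hli'.fintype_card_le_finrank
  rw [Fintype.card_option, ZMod.card, Module.finrank_matrix, Module.finrank_self,
    Fintype.card_fin] at hcard
  nlinarith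
end
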